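/- arXiv:1106.4346 — 4 statements merged into one kernel-verified Lean document; each statement's English description precedes it below -/
import Mathlib

section
/- Let σ be a communication schedule on n ≥ 1 nodes that is SVSC on the interval [0, b], and let K be the flooding (Bench-Mark) knowledge sets generated by σ. Then K(b+1, i) = Fin n (the full node set) for every node i; consequently, for any family of initial vectors s : Fin n → ℝ^d, every node i can form the exact average (1/n)·∑_{ℓ} s(ℓ) as the average of the initial vectors indexed by its knowledge set K(b+1, i). -/
/-- A communication path from node `j` to node `i` within the interval `[a, b]`:
a finite sequence of signals `σ (k q) = some (ℓ q, ℓ (q-1), s q)` for `q = 1, …, m`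
with `ℓ 0 = j`, `ℓ m = i`, `a ≤ s q ≤ k q ≤ b` for all `q`, and `s (q+1) > k q`. -/
def IsCommPath {n : ℕ} (σ : ℕ → Option (Fin n × Fin n × ℕ)) (j i : Fin n) (a b : ℕ) : Prop :=
  ∃ (m : ℕ) (node : ℕ → Fin n) (k s : ℕ → ℕ),
    0 < m ∧ node 0 = j ∧ node m = i ∧
    (∀ q, 1 ≤ q → q ≤ m → σ (k q) = some (node q, node (q - 1), s q)) ∧
    (∀ q, 1 ≤ q → q ≤ m → a ≤ s q ∧ s q ≤ k q ∧ k q ≤ b) ∧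
    (∀ q, 1 ≤ q → q < m → k q < s (q + 1))

/-- The schedule is singly V-strongly connected (SVSC) on `[a, b]`. -/
def IsSVSC {n : ℕ} (σ : ℕ → Option (Fin n × Fin n × ℕ)) (a b : ℕ) : Prop :=
  ∀ i j : Fin n, i ≠ j → IsCommPath σ j i a b

/-- **Theorem 1 (BM sufficiency).** If the schedule is SVSC on `[0, b]` then the
flooding (Bench-Mark) knowledge set of every node is full at time `b + 1`, and hence every
node can form the exact average of the initial vectors from its knowledge set. -/
theorem bm_flooding_achieves_average_consensus
    {n : ℕ} (hn : 1 ≤ n) (σ : ℕ → Option (Fin n × Fin n × ℕ))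
    (hσ : ∀ k i j s, σ k = some (i, j, s) → s ≤ k)
    (b : ℕ) (hconn : IsSVSC σ 0 b)
    (K : ℕ → Fin n → Finset (Fin n))
    (hK0 : ∀ i, K 0 i = {i})
    (hKup : ∀ k i j s, σ k = some (i, j, s) →
      K (k + 1) i = K k i ∪ K s j ∧ ∀ m, m ≠ i → K (k + 1) m = K k m)
    (hKnone : ∀ k, σ k = none → ∀ m, K (k + 1) m = K k m) :
    ∀ i : Fin n, K (b + 1) i = Finset.univ ∧
      ∀ (d : ℕ) (sInit : Fin n → EuclideanSpace ℝ (Fin d)),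
        ((K (b + 1) i).card : ℝ)⁻¹ • ∑ ℓ ∈ K (b + 1) i, sInit ℓ
          = (n : ℝ)⁻¹ • ∑ ℓ : Fin n, sInit ℓ := by
  have hstep : ∀ k i, K k i ⊆ K (k + 1) i := by
    intro k i
    rcases h : σ k with _ | ⟨p, j, s⟩
    · rw [hKnone k h i]
    · obtain ⟨h1, h2⟩ := hKup k p j s h
      by_cases hip : i = p
      · subst hip
        rw [h1]
        exact Finset.subset_union_left
      · rw [h2 i hip]
  have hmono : ∀ i, Monotone (fun k => K k i) := fun i =>
    monotone_nat_of_le_succ (fun k => hstep k i)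
  have hself : ∀ k i, i ∈ K k i := by
    intro k i
    have h0 : i ∈ K 0 i := by simp [hK0]
    exact hmono i (Nat.zero_le k) h0
  have hfull : ∀ i, K (b + 1) i = Finset.univ := by
    intro i
    rw [Finset.eq_univ_iff_forall]
    intro j
    by_cases hij : i = j
    · subst hij
      exact hself _ _
    · obtain ⟨m, node, k, s, hm, hn0, hnm, hsig, hb, hlt⟩ := hconn i j hij
      have key : ∀ q, q + 1 ≤ m → j ∈ K (k (q + 1) + 1) (node (q + 1)) := by
        intro q
        induction q with
        | zero =>
          intro hq
          rw [(hKup _ _ _ _ (hsig 1 le_rfl hq)).1]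
          apply Finset.mem_union_right
          rw [show node (1 - 1) = j from hn0]
          exact hself _ _
        | succ q ih =>
          intro hq
          rw [(hKup _ _ _ _ (hsig (q + 1 + 1) (by omega) hq)).1]
          apply Finset.mem_union_right
          exact hmono _ (hlt (q + 1) (by omega) (by omega)) (ih (by omega))
      obtain ⟨q, rfl⟩ : ∃ q, m = q + 1 := ⟨m - 1, by omega⟩
      have h := key q le_rfl
      rw [hnm] at h
      exact hmono i (Nat.succ_le_succ (hb (q + 1) (by omega) le_rfl).2.2) h
  intro i
  refine ⟨hfull i, ?_⟩
  intro d sInit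
  rw [hfull i, Finset.card_univ, Fintype.card_fin]
end

section
/- Let n ≥ 2 and d ≥ 1, let i be a node and R ⊆ Fin n a set of nodes with i ∈ R and R ≠ Fin n. Suppose f : (Fin n → ℝ^d) → ℝ^d is any function that depends only on the coordinates in R, i.e. f(s) = f(s') whenever s(ℓ) = s'(ℓ) for all ℓ ∈ R. Then there exists an assignment of initial vectors s : Fin n → ℝ^d such that f(s) ≠ (1/n)·∑_{ℓ} s(ℓ). -/
/-- **Theorem 2 (necessity of SVSC).** If `f` computes node `i`'s final estimate from the
initial vectors and depends only on the coordinates in a proper subset `R` of the nodes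
(with `i ∈ R`), then `f` cannot always output the average of all `n` initial vectors. -/
theorem no_average_consensus_from_proper_subset
    {n d : ℕ} (hn : 2 ≤ n) (hd : 1 ≤ d) (i : Fin n) (R : Finset (Fin n))
    (hiR : i ∈ R) (hR : R ≠ Finset.univ)
    (f : (Fin n → EuclideanSpace ℝ (Fin d)) → EuclideanSpace ℝ (Fin d))
    (hf : ∀ s s' : Fin n → EuclideanSpace ℝ (Fin d),
      (∀ ℓ ∈ R, s ℓ = s' ℓ) → f s = f s') :
    ∃ s : Fin n → EuclideanSpace ℝ (Fin d),
      f s ≠ (n : ℝ)⁻¹ • ∑ ℓ : Fin n, s ℓ := by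
  by_contra! h
  obtain ⟨j, hj⟩ : ∃ j, j ∉ R := by
    by_contra! hall
    exact hR (Finset.eq_univ_iff_forall.mpr hall)
  let v : EuclideanSpace ℝ (Fin d) := EuclideanSpace.single ⟨0, hd⟩ 1
  have hv : v ≠ 0 := by
    intro h0
    have h1 : v ⟨0, hd⟩ = 0 := by rw [h0]; rfl
    simp [v] at h1
  have key := hf (Pi.single j v) 0 (by
    intro l hl
    have hlj : l ≠ j := fun e => hj (e ▸ hl)
    simp [hlj])
  rw [h, h, Finset.sum_pi_single'] at key
  have hn0 : n ≠ 0 := by omega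
  simp [hn0, hv] at key
end

section
/- Let σ be a communication schedule on n ≥ 1 nodes and let W be the OH (One-Hop) knowledge sets generated by σ. Then W(b+1, i) = Fin n holds for every node i if and only if for every node i at least one of the following holds: (C1i) for every j ≠ i there is a signal σ(k) = some (i, j, s) with s ≤ k ≤ b; or (C2i) there exist a node ℓ, a time a, and a communication path from ℓ to i within [a, b] whose first signal is sent at time a, such that for every j ≠ ℓ there is a signal σ(k') = some (ℓ, j, s') with k' < a. -/
/-- A communication path from node `j` to node `i` within the interval `[a, b]`,
whose first signal is sent at time `a₀`. -/
def IsCommPathFirstSentAt {n : ℕ} (σ : ℕ → Option (Fin n × Fin n × ℕ)) (j i : Fin n)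
    (a₀ a b : ℕ) : Prop :=
  ∃ (m : ℕ) (node : ℕ → Fin n) (k s : ℕ → ℕ),
    0 < m ∧ node 0 = j ∧ node m = i ∧ s 1 = a₀ ∧
    (∀ q, 1 ≤ q → q ≤ m → σ (k q) = some (node q, node (q - 1), s q)) ∧
    (∀ q, 1 ≤ q → q ≤ m → a ≤ s q ∧ s q ≤ k q ∧ k q ≤ b) ∧
    (∀ q, 1 ≤ q → q < m → k q < s (q + 1))

theorem IsCommPathFirstSentAt.single {n : ℕ} {σ : ℕ → Option (Fin n × Fin n × ℕ)}
    {j i : Fin n} {s t : ℕ} (h : σ t = some (i, j, s)) (hs : s ≤ t) :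
    IsCommPathFirstSentAt σ j i s s t := by
  refine ⟨1, fun q => if q = 0 then j else i, fun _ => t, fun _ => s, by norm_num, by simp,
    by simp, rfl, ?_, ?_, ?_⟩
  · intro q h1 h2
    obtain rfl : q = 1 := by omega
    simpa using h
  · intro q h1 h2
    exact ⟨le_refl _, hs, le_refl _⟩
  · intro q h1 h2
    omega

theorem IsCommPathFirstSentAt.extend {n : ℕ} {σ : ℕ → Option (Fin n × Fin n × ℕ)}
    {l j i : Fin n} {a c s t : ℕ} (hp : IsCommPathFirstSentAt σ l j a a c)
    (h : σ t = some (i, j, s)) (hs : s ≤ t) (hc : c < s) :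
    IsCommPathFirstSentAt σ l i a a t := by
  obtain ⟨m, node, k, S, hm, h0, hmj, hS, h1, h2, h3⟩ := hp
  refine ⟨m + 1, fun q => if q ≤ m then node q else i, fun q => if q ≤ m then k q else t,
    fun q => if q ≤ m then S q else s, by omega, by simpa using h0, by simp, ?_, ?_, ?_, ?_⟩
  · have : 1 ≤ m := hm
    simpa [this] using hS
  · intro q hq1 hq2
    by_cases hq : q ≤ m
    · have hq' : q - 1 ≤ m := by omega
      simpa only [hq, hq', if_true] using h1 q hq1 hq
    · obtain rfl : q = m + 1 := by omega
      simpa [hmj] using h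
  · intro q hq1 hq2
    by_cases hq : q ≤ m
    · have := h2 q hq1 hq
      simp only [hq, if_true]
      omega
    · have := h2 m hm le_rfl
      simp only [hq, if_false]
      omega
  · intro q hq1 hq2
    have hq : q ≤ m := by omega
    by_cases hq' : q + 1 ≤ m
    · simpa only [hq, hq', if_true] using h3 q hq1 (by omega)
    · have := h2 q hq1 hq
      simp only [hq, hq', if_true, if_false]
      omega

/-- **Theorem 4 (OH necessary and sufficient conditions).** Under the OH (One-Hop)
algorithm, every node obtains average-consensus by time `b + 1` if and only if every
node `i` satisfies condition (C1i) or condition (C2i). -/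
theorem oh_average_consensus_iff
    {n : ℕ} (hn : 1 ≤ n) (σ : ℕ → Option (Fin n × Fin n × ℕ))
    (hσ : ∀ k i j s, σ k = some (i, j, s) → s ≤ k)
    (b : ℕ)
    (W : ℕ → Fin n → Finset (Fin n))
    (hW0 : ∀ i, W 0 i = {i})
    (hWup : ∀ k i j s, σ k = some (i, j, s) →
      (W (k + 1) i = if W s j = Finset.univ then Finset.univ else W k i ∪ {j}) ∧
      ∀ m, m ≠ i → W (k + 1) m = W k m)
    (hWnone : ∀ k, σ k = none → ∀ m, W (k + 1) m = W k m) :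
    (∀ i : Fin n, W (b + 1) i = Finset.univ) ↔
      (∀ i : Fin n,
        (∀ j : Fin n, j ≠ i → ∃ k s, σ k = some (i, j, s) ∧ s ≤ k ∧ k ≤ b) ∨
        (∃ (ℓ : Fin n) (a : ℕ), IsCommPathFirstSentAt σ ℓ i a a b ∧
          ∀ j : Fin n, j ≠ ℓ → ∃ k' s', σ k' = some (ℓ, j, s') ∧ k' < a)) := by
  have step : ∀ k i, W k i ⊆ W (k + 1) i := by
    intro k i
    rcases hk : σ k with _ | ⟨i', j, s⟩
    · rw [hWnone k hk i]
    · obtain ⟨e1, e2⟩ := hWup k i' j s hk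
      by_cases hi : i = i'
      · subst hi
        rw [e1]
        split_ifs
        · exact Finset.subset_univ _
        · exact Finset.subset_union_left
      · rw [e2 i hi]
  have mono : ∀ i k t, k ≤ t → W k i ⊆ W t i := by
    intro i k t hkt
    induction t, hkt using Nat.le_induction with
    | base => exact Finset.Subset.refl _
    | succ t _ ih => exact ih.trans (step t i)
  have monoU : ∀ i k t, k ≤ t → W k i = Finset.univ → W t i = Finset.univ := by
    intro i k t hkt h
    have := mono i k t hkt
    rw [h] at this
    exact Finset.univ_subset_iff.mp this
  have recv : ∀ k i j s t, σ k = some (i, j, s) → k < t → j ∈ W t i := by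
    intro k i j s t hk hkt
    apply mono i (k + 1) t hkt
    rw [(hWup k i j s hk).1]
    split_ifs <;> simp
  have direct : ∀ t i, (∀ j, j ≠ i → ∃ k s, σ k = some (i, j, s) ∧ k < t) →
      W t i = Finset.univ := by
    intro t i h
    apply Finset.eq_univ_of_forall
    intro j
    by_cases hj : j = i
    · subst hj
      apply mono j 0 t (Nat.zero_le _)
      simp [hW0]
    · obtain ⟨k, s, hk, hkt⟩ := h j hj
      exact recv k i j s t hk hkt
  constructor
  · have key : ∀ t i, (∀ x ∈ W t i, x ≠ i → ∃ k s, σ k = some (i, x, s) ∧ k < t) ∨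
        (∃ (l : Fin n) (a c : ℕ), c < t ∧ IsCommPathFirstSentAt σ l i a a c ∧
          ∀ j : Fin n, j ≠ l → ∃ k' s', σ k' = some (l, j, s') ∧ k' < a) := by
      intro t
      induction t using Nat.strong_induction_on with
      | _ t ih =>
      intro i
      rcases t with _ | t
      · left
        intro x hx hxi
        rw [hW0] at hx
        exact absurd (Finset.mem_singleton.mp hx) hxi
      have same : W (t + 1) i = W t i →
          (∀ x ∈ W (t + 1) i, x ≠ i → ∃ k s, σ k = some (i, x, s) ∧ k < t + 1) ∨
          (∃ (l : Fin n) (a c : ℕ), c < t + 1 ∧ IsCommPathFirstSentAt σ l i a a c ∧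
            ∀ j : Fin n, j ≠ l → ∃ k' s', σ k' = some (l, j, s') ∧ k' < a) := by
        intro he
        rcases ih t (by omega) i with h | ⟨l, a, c, hc, h⟩
        · left
          intro x hx hxi
          rw [he] at hx
          obtain ⟨k, s, hk, hkt⟩ := h x hx hxi
          exact ⟨k, s, hk, by omega⟩
        · exact Or.inr ⟨l, a, c, by omega, h⟩
      rcases hk : σ t with _ | ⟨i', j, s⟩
      · exact same (hWnone t hk i)
      · obtain ⟨e1, e2⟩ := hWup t i' j s hk
        by_cases hi : i = i'
        · subst hi
          have hst := hσ t i j s hk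
          by_cases hu : W s j = Finset.univ
          · right
            rcases ih s (by omega) j with h | ⟨l, a, c, hc, hp, h⟩
            · refine ⟨j, s, t, by omega, .single hk hst, ?_⟩
              intro x hx
              exact h x (by simp [hu]) hx
            · exact ⟨l, a, t, by omega, hp.extend hk hst hc, h⟩
          · rw [if_neg hu] at e1
            rcases ih t (by omega) i with h | ⟨l, a, c, hc, h⟩
            · left
              intro x hx hxi
              rw [e1, Finset.mem_union, Finset.mem_singleton] at hx
              rcases hx with hx | rfl
              · obtain ⟨k, s, hk, hkt⟩ := h x hx hxi
                exact ⟨k, s, hk, by omega⟩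
              · exact ⟨t, s, hk, by omega⟩
            · exact Or.inr ⟨l, a, c, by omega, h⟩
        · exact same (e2 i hi)
    intro hall i
    rcases key (b + 1) i with h | ⟨l, a, c, hc, hp, h⟩
    · left
      intro j hj
      obtain ⟨k, s, hk, hkb⟩ := h j (by simp [hall i]) hj
      exact ⟨k, s, hk, hσ k i j s hk, by omega⟩
    · right
      refine ⟨l, a, ?_, h⟩
      obtain ⟨m, node, k, S, hm, h0, hmj, hS, h1, h2, h3⟩ := hp
      refine ⟨m, node, k, S, hm, h0, hmj, hS, h1, ?_, h3⟩
      intro q hq1 hq2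
      have := h2 q hq1 hq2
      omega
  · intro hC i
    rcases hC i with h | ⟨l, a, ⟨m, node, k, S, hm, h0, hmj, hS, h1, h2, h3⟩, h⟩
    · apply direct
      intro j hj
      obtain ⟨k, s, hk, _, hkb⟩ := h j hj
      exact ⟨k, s, hk, by omega⟩
    · have ha : W a l = Finset.univ := direct a l h
      have along : ∀ q, 1 ≤ q → q ≤ m → W (k q + 1) (node q) = Finset.univ := by
        intro q hq
        induction q, hq using Nat.le_induction with
        | base =>
          intro hq2
          have hs := h1 1 le_rfl hq2
          rw [(hWup _ _ _ _ hs).1, if_pos]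
          simpa [h0, hS] using ha
        | succ q hq ih =>
          intro hq2
          have hs := h1 (q + 1) (by omega) hq2
          rw [(hWup _ _ _ _ hs).1, if_pos]
          exact monoU _ _ _ (h3 q hq (by omega)) (ih (by omega))
      have hf := along m hm le_rfl
      rw [hmj] at hf
      exact monoU i _ _ (by have := h2 m hm le_rfl; omega) hf
end

section
/- Let σ be a communication schedule on n ≥ 1 nodes that is IVCC, and let A be the DDA (Discretized Distributed-Averaging) states in set form generated by σ. Then average-consensus is achieved in finite time: there exists K ∈ ℕ such that A(k, i) = Fin n for every node i and every k ≥ K. -/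
/-- The schedule is singly V-completely connected (SVCC) on `[a, b]`: there are a node `î`
and a time `m` with `a ≤ m < b` such that every other node sends a signal received by `î`
within `[a, m]`, and `î` sends a signal received by every other node within `(m, b]`. -/
def IsSVCC {n : ℕ} (σ : ℕ → Option (Fin n × Fin n × ℕ)) (a b : ℕ) : Prop :=
  ∃ (ihat : Fin n) (m : ℕ), a ≤ m ∧ m < b ∧
    (∀ j : Fin n, j ≠ ihat → ∃ k s, σ k = some (ihat, j, s) ∧ a ≤ s ∧ s ≤ k ∧ k ≤ m) ∧
    (∀ j : Fin n, j ≠ ihat → ∃ k' s', σ k' = some (j, ihat, s') ∧ m < s' ∧ s' ≤ k' ∧ k' ≤ b)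

/-- The schedule is infinitely V-completely connected (IVCC). -/
def IsIVCC {n : ℕ} (σ : ℕ → Option (Fin n × Fin n × ℕ)) : Prop :=
  ∀ a : ℕ, ∃ T : ℕ, IsSVCC σ a (a + T)

theorem dda_stab {n : ℕ} (f : ℕ → Finset (Fin n))
    (h : ∀ k, f (k+1) = f k ∨ (f k).card < (f (k+1)).card) :
    ∃ K, ∀ k, K ≤ k → f k = f K := by
  by_contra hc
  push Not at hc
  have hmono : Monotone (fun k => (f k).card) := by
    apply monotone_nat_of_le_succ
    intro k
    rcases h k with h | h
    · simp [h]
    · exact h.le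
  have key : ∀ N, ∃ k, N ≤ (f k).card := by
    intro N
    induction N with
    | zero => exact ⟨0, Nat.zero_le _⟩
    | succ N ih =>
      obtain ⟨K, hK⟩ := ih
      by_contra hcon
      push Not at hcon
      obtain ⟨k, hk, hne⟩ := hc K
      apply hne
      clear hne
      induction k, hk using Nat.le_induction with
      | base => rfl
      | succ k hk ih =>
        rcases h k with h | h
        · rw [h, ih]
        · have h1 := hmono hk
          have h2 := hcon (k+1)
          simp only at h1
          omega
  obtain ⟨k, hk⟩ := key (n+1)
  have := card_finset_fin_le (f k)
  omega

/-- **Theorem 5 (DDA sufficiency).** Under an IVCC communication schedule, the DDA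
(Discretized Distributed-Averaging) states in set form reach the full node set in finite
time, i.e. average-consensus is achieved. -/
theorem dda_achieves_average_consensus
    {n : ℕ} (hn : 1 ≤ n) (σ : ℕ → Option (Fin n × Fin n × ℕ))
    (hσ : ∀ k i j s, σ k = some (i, j, s) → s ≤ k)
    (hconn : IsIVCC σ)
    (A : ℕ → Fin n → Finset (Fin n))
    (hA0 : ∀ i, A 0 i = {i})
    (hAup : ∀ k i j s, σ k = some (i, j, s) →
      (A (k + 1) i =
        if ((A k i).erase i ∩ (A s j).erase i) = ∅ then A k i ∪ A s j
        else if ((A k i).erase i).card < ((A s j).erase i).card then A s j ∪ {i}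
        else A k i) ∧
      ∀ m, m ≠ i → A (k + 1) m = A k m)
    (hAnone : ∀ k, σ k = none → ∀ m, A (k + 1) m = A k m) :
    ∃ K : ℕ, ∀ k, K ≤ k → ∀ i : Fin n, A k i = Finset.univ := by
  have hmem : ∀ k i, i ∈ A k i := by
    intro k
    induction k with
    | zero => intro i; simp [hA0]
    | succ k ih =>
      intro i
      rcases hs : σ k with _ | ⟨i', j, s⟩
      · rw [hAnone k hs]; exact ih i
      · obtain ⟨h1, h2⟩ := hAup k i' j s hs
        by_cases hi : i = i'
        · subst hi
          rw [h1]
          have := ih i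
          split_ifs <;> simp [this]
        · rw [h2 i hi]; exact ih i
  have hstep : ∀ i k, A (k+1) i = A k i ∨ (A k i).card < (A (k+1) i).card := by
    intro i k
    rcases hs : σ k with _ | ⟨i', j, s⟩
    · left; exact hAnone k hs i
    · obtain ⟨h1, h2⟩ := hAup k i' j s hs
      by_cases hi : i = i'
      · subst hi
        rw [h1]
        have hm := hmem k i
        split_ifs with c1 c2
        · by_cases hsub : A s j ⊆ A k i
          · left; exact Finset.union_eq_left.mpr hsub
          · right
            apply Finset.card_lt_card
            refine ⟨Finset.subset_union_left, fun hh => hsub ?_⟩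
            exact Finset.subset_union_right.trans hh
        · right
          have e : A s j ∪ {i} = insert i ((A s j).erase i) := by
            ext x; simp; tauto
          rw [e, Finset.card_insert_of_notMem (Finset.notMem_erase _ _)]
          have := Finset.card_erase_add_one hm
          omega
        · left; rfl
      · left; exact h2 i hi
  choose Kf hKf using fun i => dda_stab (fun k => A k i) (hstep i)
  obtain ⟨K, hK⟩ : ∃ K, ∀ k, K ≤ k → ∀ i, A k i = A K i := by
    refine ⟨Finset.univ.sup Kf, fun k hk i => ?_⟩
    have h0 : Kf i ≤ Finset.univ.sup Kf := Finset.le_sup (Finset.mem_univ i)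
    exact (hKf i k (h0.trans hk)).trans (hKf i _ h0).symm
  have hrecv : ∀ k i j s, σ k = some (i, j, s) → K ≤ s → j ≠ i →
      ((A K j).erase i).card ≤ ((A K i).erase i).card := by
    intro k i j s hs hKs hji
    have hsk := hσ k i j s hs
    have h1 := (hAup k i j s hs).1
    rw [hK (k+1) (by omega), hK k (by omega), hK s hKs] at h1
    split_ifs at h1 with c1 c2
    · exfalso
      have hj : j ∈ A K i := by
        rw [h1]; exact Finset.mem_union_right _ (hmem K j)
      have : j ∈ (A K i).erase i ∩ (A K j).erase i := by
        simp [hji, hj, hmem K j]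
      rw [c1] at this
      simp at this
    · exfalso
      have : (A K j).erase i = (A K i).erase i := by
        rw [h1]; ext x; simp
      rw [this] at c2
      exact lt_irrefl _ c2
    · omega
  obtain ⟨T, c, m, ham, hmb, hin, hout⟩ := hconn K
  have hin' : ∀ j, j ≠ c → ((A K j).erase c).card ≤ ((A K c).erase c).card := by
    intro j hj
    obtain ⟨k, s, h1, h2, h3, h4⟩ := hin j hj
    exact hrecv k c j s h1 h2 hj
  have hout' : ∀ j, j ≠ c → ((A K c).erase j).card ≤ ((A K j).erase j).card := by
    intro j hj
    obtain ⟨k, s, h1, h2, h3, h4⟩ := hout j hj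
    exact hrecv k j c s h1 (by omega) hj.symm
  have hc : A K c = Finset.univ := by
    rw [Finset.eq_univ_iff_forall]
    intro j
    by_contra hj
    have hjc : j ≠ c := by rintro rfl; exact hj (hmem K j)
    have h1 := hin' j hjc
    have h2 := hout' j hjc
    rw [Finset.erase_eq_of_notMem hj] at h2
    have h3 := Finset.card_erase_add_one (hmem K j)
    have h4 := Finset.card_erase_add_one (hmem K c)
    have h5 := Finset.pred_card_le_card_erase (s := A K j) (a := c)
    omega
  refine ⟨K, fun k hk i => ?_⟩
  rw [hK k hk]
  by_cases hi : i = c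
  · rw [hi, hc]
  · have h2 := hout' i hi
    rw [hc] at h2
    have h3 := Finset.card_erase_add_one (hmem K i)
    have h4 := Finset.card_erase_add_one (Finset.mem_univ i)
    apply (Finset.card_eq_iff_eq_univ _).mp
    have h5 := Finset.card_le_univ (A K i)
    rw [Finset.card_univ] at h4
    omega
end
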